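/- VC-dimension lower bound for d = 1, ℓ = 2: for every integer t ≥ 1 there exist an integer m with m ≤ (t+2)·2^t, a polygonal curve P : [0,1] → ℝ with breakpoint parameters 0 = t_1 < t_2 < … < t_m = 1, and t polygonal curves Q_1,…,Q_t ∈ X^1_2 (line segments in ℝ) such that the set {Q_1,…,Q_t} is shattered by the dual sets r_z with Δ = 1/3: for every subset T ⊆ {1,…,t} there exists z ∈ {1,…,m−1} with T = { s : Q_s ∈ r_z }. Hence the VC-dimension of the dual set system R* is at least t, which is in Ω(log m). -/

import Mathlib

open Set

noncomputable section

/-- Points in `ℝ^d`. -/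
abbrev Pt (d : ℕ) : Type := EuclideanSpace ℝ (Fin d)

/-- A reparametrization: a continuous strictly increasing bijection of `[0,1]` onto itself. -/
def IsReparam (γ : ℝ → ℝ) : Prop :=
  ContinuousOn γ (Icc 0 1) ∧ StrictMonoOn γ (Icc 0 1) ∧ γ '' Icc 0 1 = Icc 0 1

/-- The Fréchet distance `d_F(P,Q) = inf_γ sup_{t ∈ [0,1]} ‖P(γ(t)) - Q(t)‖`
(only the values of the curves on `[0,1]` are relevant). -/
def frechetDist {d : ℕ} (P Q : ℝ → Pt d) : ℝ :=
  ⨅ γ : {γ : ℝ → ℝ // IsReparam γ}, ⨆ s : Icc (0:ℝ) 1, ‖P (γ.1 s.1) - Q s.1‖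

/-- The linearly parametrized line segment from `a` to `b`. -/
def seg {d : ℕ} (a b : Pt d) : ℝ → Pt d := fun s => (1 - s) • a + s • b

/-- The subcurve `P[a,b]` of `P`, linearly reparametrized over `[0,1]`. -/
def subcurve {d : ℕ} (P : ℝ → Pt d) (a b : ℝ) : ℝ → Pt d := fun s => P (a + s * (b - a))

/-- The polygonal curve with vertex sequence `pts 0, …, pts n`, uniformly
parametrized over `[0,1]`. -/
def polyline {d n : ℕ} (pts : Fin (n + 1) → Pt d) : ℝ → Pt d := fun s =>
  if h : n = 0 then pts 0
  else
    let i : ℕ := min ⌊s * n⌋₊ (n - 1)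
    have hi : i < n := lt_of_le_of_lt (min_le_right _ _) (by omega)
    (1 - (s * n - i)) • pts ⟨i, hi.trans n.lt_succ_self⟩ +
      (s * n - i) • pts ⟨i + 1, Nat.succ_lt_succ hi⟩

/-- `f ∈ 𝕏^d_ℓ`: `f` is a polygonal curve with at most `ℓ` vertices. -/
def IsPolygonal {d : ℕ} (f : ℝ → Pt d) (ℓ : ℕ) : Prop :=
  ∃ n : ℕ, n + 1 ≤ ℓ ∧ ∃ pts : Fin (n + 1) → Pt d, f = polyline pts

/-- Concatenation of two curves (each parametrized over `[0,1]`). -/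
def concat {d : ℕ} (f g : ℝ → Pt d) : ℝ → Pt d := fun s =>
  if s ≤ 1 / 2 then f (2 * s) else g (2 * s - 1)

/-- `CostLE P m t C Δ` states that the clustering cost satisfies `φ(P,C) ≤ Δ`:
there is a family `I` of index pairs `(i,j)`, `1 ≤ i < j ≤ m`, with
`⋃_{(i,j) ∈ I} [t i, t j] = [0,1]`, such that every corresponding subcurve is
within Fréchet distance `Δ` of some center in `C`. -/
def CostLE {d : ℕ} (P : ℝ → Pt d) (m : ℕ) (t : ℕ → ℝ) (C : Set (ℝ → Pt d)) (Δ : ℝ) : Prop :=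
  ∃ I : Set (ℕ × ℕ),
    (∀ q ∈ I, 1 ≤ q.1 ∧ q.1 < q.2 ∧ q.2 ≤ m) ∧
    (⋃ q ∈ I, Icc (t q.1) (t q.2)) = Icc (0:ℝ) 1 ∧
    ∀ q ∈ I, ∃ c ∈ C, frechetDist (subcurve P (t q.1) (t q.2)) c ≤ Δ

/-- The set `r_Q` of the set system `R` (ground set `{1,…,m−1}`):
`r_Q = {z : ∃ i ≤ z < j, d_F(Q, P[t_i,t_j]) ≤ Δ}`. -/
def rSet {d : ℕ} (P : ℝ → Pt d) (m : ℕ) (t : ℕ → ℝ) (Δ : ℝ) (Q : ℝ → Pt d) : Set ℕ :=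
  {z | 1 ≤ z ∧ z < m ∧ ∃ i j, 1 ≤ i ∧ i ≤ z ∧ z < j ∧ j ≤ m ∧
    frechetDist Q (subcurve P (t i) (t j)) ≤ Δ}

/-! All curves live on one line, spanned by a unit vector `e`. The segments are `Q k`, running from
`0` to `(k + 1) e`. For every `b < 2 ^ t`, read as the subset of `{0, …, t - 1}` given by its binary
digits, the curve `P` has a block of `t + 2` vertices: the separator `-1`, the start `0`, and then
for each `k < t` the vertex `k + 1` if `k` belongs to the subset and `k + 1/2` otherwise. The edge
leaving the start `0` of block `b` realizes the subset `b`.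

* If `k` belongs to the subset, then the piece of the block from `0` to `k + 1` is monotone, so it
  is a reparametrization of `Q k` up to plateaus, and its Fréchet distance to `Q k` is `0`.
* If a subcurve through that edge is at Fréchet distance less than `1/2` from `Q k`, then it
  contains no separator, as `-1` is at distance at least `1` from every point of `Q k`. So it ends
  at a vertex of the same block, and this vertex is at distance less than `1/2` from `k + 1`. Only
  `k + 1` itself qualifies, and it is a vertex only if `k` belongs to the subset. -/

/-! ### Piecewise linear interpolation -/

section Interpolation

variable {E : Type*} [AddCommGroup E] [Module ℝ E]

/-- The piecewise linear interpolation of `x 0, …, x n` at the nodes `0, …, n`, constant outside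
`[0, n]`. It is a sum of ramps, each varying on a single edge, which makes continuity and
monotonicity immediate, unlike the case distinction in `polyline`. -/
def interp (x : ℕ → E) (n : ℕ) (y : ℝ) : E :=
  x 0 + ∑ k ∈ Finset.range n, max 0 (min 1 (y - k)) • (x (k + 1) - x k)

lemma interp_succ (x : ℕ → E) (n : ℕ) (y : ℝ) :
    interp x (n + 1) y = interp x n y + max 0 (min 1 (y - n)) • (x (n + 1) - x n) := by
  simp only [interp, Finset.sum_range_succ, add_assoc]

lemma interp_of_le (x : ℕ → E) {n : ℕ} {y : ℝ} (h : n ≤ y) : interp x n y = x n := by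
  induction n with
  | zero => simp [interp]
  | succ n ih =>
    push_cast at h
    rw [interp_succ, ih (by linarith), min_eq_left (by linarith), max_eq_right zero_le_one,
      one_smul, add_sub_cancel]

lemma interp_of_mem_Icc (x : ℕ → E) {n k : ℕ} {y : ℝ} (hk : k < n)
    (hy : y ∈ Icc (k : ℝ) (k + 1)) : interp x n y = x k + (y - k) • (x (k + 1) - x k) := by
  induction n, hk using Nat.le_induction with
  | base =>
    rw [Nat.succ_eq_add_one, interp_succ, interp_of_le x hy.1, min_eq_right (by linarith [hy.2]),
      max_eq_right (by linarith [hy.1])]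
  | succ n hkn ih =>
    have hkn' : (k : ℝ) + 1 ≤ n := mod_cast hkn
    rw [interp_succ, ih, max_eq_left ((min_le_right _ _).trans (by linarith [hy.2])), zero_smul,
      add_zero]

lemma interp_natCast (x : ℕ → E) {n k : ℕ} (hk : k ≤ n) : interp x n k = x k := by
  rcases hk.lt_or_eq with h | rfl
  · simp [interp_of_mem_Icc x h (y := k) (by simp)]
  · exact interp_of_le x le_rfl

lemma interp_smul_const (x : ℕ → ℝ) (n : ℕ) (y : ℝ) (v : E) :
    interp (fun k => x k • v) n y = interp x n y • v := by
  simp only [interp, add_smul, Finset.sum_smul, smul_assoc, sub_smul]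

lemma continuous_interp [TopologicalSpace E] [ContinuousAdd E] [ContinuousSMul ℝ E]
    (x : ℕ → E) (n : ℕ) : Continuous (interp x n) := by
  unfold interp; fun_prop

lemma monotoneOn_interp {x : ℕ → ℝ} (n : ℕ) {a b : ℕ} (hx : ∀ k ∈ Ico a b, x k ≤ x (k + 1)) :
    MonotoneOn (interp x n) (Icc a b) := by
  intro y hy y' hy' hyy'
  refine add_le_add le_rfl (Finset.sum_le_sum fun k _ => ?_)
  rcases lt_or_ge k a with hka | hak
  · have hka' : (k : ℝ) + 1 ≤ a := mod_cast hka
    rw [min_eq_left (by linarith [hy.1]), min_eq_left (by linarith [hy'.1])]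
  rcases lt_or_ge k b with hkb | hbk
  · exact smul_le_smul_of_nonneg_right (by gcongr) (sub_nonneg.2 (hx k ⟨hak, hkb⟩))
  · have hbk' : (b : ℝ) ≤ k := mod_cast hbk
    rw [min_eq_right (by linarith [hy.2]), min_eq_right (by linarith [hy'.2]),
      max_eq_left (by linarith [hy.2]), max_eq_left (by linarith [hy'.2])]

end Interpolation

/-! ### Polygonal curves and their subcurves -/

section Polyline

variable {d : ℕ}

lemma polyline_pair (v w : Pt d) : polyline ![v, w] = seg v w := by
  funext s
  simp [polyline, seg]

lemma polyline_eq_interp (p : ℕ → Pt d) (n : ℕ) {s : ℝ} (hs : s ∈ Icc (0 : ℝ) 1) :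
    polyline (fun g : Fin (n + 1) => p g) s = interp p n (s * n) := by
  rcases n.eq_zero_or_pos with rfl | hn
  · simp [polyline, interp]
  have hfloor : ((min ⌊s * n⌋₊ (n - 1) : ℕ) : ℝ) ≤ s * n :=
    (Nat.cast_le.2 (min_le_left _ _)).trans (Nat.floor_le (mul_nonneg hs.1 n.cast_nonneg))
  have hceil : s * n ≤ (min ⌊s * n⌋₊ (n - 1) : ℕ) + 1 := by
    rcases min_choice ⌊s * n⌋₊ (n - 1) with h | h <;> rw [h]
    · exact (Nat.lt_floor_add_one _).le
    · rw [Nat.cast_pred hn, sub_add_cancel]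
      exact mul_le_of_le_one_left n.cast_nonneg hs.2
  rw [interp_of_mem_Icc p (by omega) ⟨hfloor, hceil⟩]
  simp only [polyline, hn.ne', dite_false]
  module

lemma subcurve_polyline (p : ℕ → Pt d) {n a b : ℕ} (hab : a ≤ b) (hbn : b ≤ n) {u : ℝ}
    (hu : u ∈ Icc (0 : ℝ) 1) :
    subcurve (polyline fun g : Fin (n + 1) => p g) (a / n) (b / n) u =
      interp p n (a + u * (b - a)) := by
  rcases n.eq_zero_or_pos with rfl | hn
  · simp [subcurve, polyline, interp]
  have hn' : (0 : ℝ) < n := mod_cast hn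
  have hab' : (a : ℝ) ≤ b := mod_cast hab
  have hbn' : (b : ℝ) ≤ n := mod_cast hbn
  have hparam : (a : ℝ) / n + u * (b / n - a / n) = (a + u * (b - a)) / n := by ring
  have hmem : (a + u * (b - a)) / n ∈ Icc (0 : ℝ) 1 :=
    ⟨div_nonneg (add_nonneg a.cast_nonneg (mul_nonneg hu.1 (sub_nonneg.2 hab'))) hn'.le,
      (div_le_one hn').2 (by nlinarith [hu.2])⟩
  rw [subcurve, hparam, polyline_eq_interp p n hmem, div_mul_cancel₀ _ hn'.ne']

lemma continuousOn_subcurve_polyline (p : ℕ → Pt d) {n a b : ℕ} (hab : a ≤ b) (hbn : b ≤ n) :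
    ContinuousOn (subcurve (polyline fun g : Fin (n + 1) => p g) (a / n) (b / n)) (Icc 0 1) :=
  ((continuous_interp p n).comp (by fun_prop : Continuous fun u : ℝ => (a : ℝ) + u * (b - a)))
    |>.continuousOn.congr fun _ hu => subcurve_polyline p hab hbn hu

lemma continuous_seg (v w : Pt d) : Continuous (seg v w) := by
  unfold seg; fun_prop

lemma seg_zero_smul (c u : ℝ) (v : Pt d) : seg 0 (c • v) u = (u * c) • v := by
  simp [seg, smul_smul]

lemma seg_one (v w : Pt d) : seg v w 1 = w := by
  simp [seg]

lemma seg_right_injective (v : Pt d) : Function.Injective (seg v) := fun w w' h => by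
  simpa only [seg_one] using congrFun h 1

end Polyline

/-! ### Fréchet distance -/

section Frechet

variable {d : ℕ}

lemma IsReparam.mapsTo {γ : ℝ → ℝ} (hγ : IsReparam γ) : MapsTo γ (Icc 0 1) (Icc 0 1) :=
  mapsTo_iff_image_subset.2 hγ.2.2.subset

lemma IsReparam.map_one {γ : ℝ → ℝ} (hγ : IsReparam γ) : γ 1 = 1 := by
  have one_mem : (1 : ℝ) ∈ Icc (0 : ℝ) 1 := right_mem_Icc.2 zero_le_one
  obtain ⟨u, hu, hu1⟩ : (1 : ℝ) ∈ γ '' Icc 0 1 := hγ.2.2.symm ▸ one_mem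
  exact (hγ.mapsTo one_mem).2.antisymm (hu1.ge.trans (hγ.2.1.monotoneOn hu one_mem hu.2))

lemma isReparam_of_endpoints {γ : ℝ → ℝ} (hcont : ContinuousOn γ (Icc 0 1))
    (hmono : StrictMonoOn γ (Icc 0 1)) (h0 : γ 0 = 0) (h1 : γ 1 = 1) : IsReparam γ := by
  refine ⟨hcont, hmono, Subset.antisymm ?_ ?_⟩
  · simpa only [h0, h1] using hmono.monotoneOn.image_Icc_subset
  · simpa only [h0, h1] using intermediate_value_Icc zero_le_one hcont

lemma isReparam_id : IsReparam id :=
  isReparam_of_endpoints continuousOn_id (strictMono_id.strictMonoOn _) rfl rfl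

lemma isReparam_mul_add_mul {φ : ℝ → ℝ} (hcont : ContinuousOn φ (Icc 0 1))
    (hmono : MonotoneOn φ (Icc 0 1)) (h0 : φ 0 = 0) (h1 : φ 1 = 1) {η : ℝ}
    (hη : η ∈ Ioc (0 : ℝ) 1) : IsReparam fun u => (1 - η) * φ u + η * u := by
  refine isReparam_of_endpoints (by fun_prop) (fun u hu v hv huv => ?_)
    (by simp [h0]) (by simp [h1])
  exact add_lt_add_of_le_of_lt (mul_le_mul_of_nonneg_left (hmono hu hv huv.le) (sub_nonneg.2 hη.2))
    (mul_lt_mul_of_pos_left huv hη.1)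

lemma frechetDist_nonneg (P Q : ℝ → Pt d) : 0 ≤ frechetDist P Q :=
  Real.iInf_nonneg fun _ => Real.iSup_nonneg fun _ => norm_nonneg _

lemma frechetDist_le_of_isReparam {P Q : ℝ → Pt d} {γ : ℝ → ℝ} (hγ : IsReparam γ) {ε : ℝ}
    (h : ∀ u ∈ Icc (0 : ℝ) 1, ‖P (γ u) - Q u‖ ≤ ε) : frechetDist P Q ≤ ε := by
  have hbdd : BddBelow (range fun γ : {γ : ℝ → ℝ // IsReparam γ} =>
      ⨆ s : Icc (0 : ℝ) 1, ‖P (γ.1 s.1) - Q s.1‖) :=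
    ⟨0, forall_mem_range.2 fun _ => Real.iSup_nonneg fun _ => norm_nonneg _⟩
  exact (ciInf_le hbdd ⟨γ, hγ⟩).trans (ciSup_le fun u => h u.1 u.2)

/-- Continuity keeps the suprema in `frechetDist` from being those of unbounded sets, which have the
junk value `0`. -/
lemma exists_isReparam_of_frechetDist_lt {P Q : ℝ → Pt d} (hP : ContinuousOn P (Icc 0 1))
    (hQ : ContinuousOn Q (Icc 0 1)) {ε : ℝ} (h : frechetDist P Q < ε) :
    ∃ γ, IsReparam γ ∧ ∀ u ∈ Icc (0 : ℝ) 1, ‖P (γ u) - Q u‖ < ε := by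
  have : Nonempty {γ : ℝ → ℝ // IsReparam γ} := ⟨⟨id, isReparam_id⟩⟩
  obtain ⟨⟨γ, hγ⟩, hlt⟩ := exists_lt_of_ciInf_lt h
  have hcont : ContinuousOn (fun u => ‖P (γ u) - Q u‖) (Icc 0 1) :=
    ((hP.comp hγ.1 hγ.mapsTo).sub hQ).norm
  have hbdd : BddAbove (range fun u : Icc (0 : ℝ) 1 => ‖P (γ u) - Q u‖) := by
    simpa only [image_eq_range] using isCompact_Icc.bddAbove_image hcont
  exact ⟨γ, hγ, fun u hu => (le_ciSup hbdd ⟨u, hu⟩).trans_lt hlt⟩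

lemma exists_norm_sub_lt_of_frechetDist_lt {P Q : ℝ → Pt d} (hP : ContinuousOn P (Icc 0 1))
    (hQ : ContinuousOn Q (Icc 0 1)) {ε : ℝ} (h : frechetDist P Q < ε) {u : ℝ}
    (hu : u ∈ Icc (0 : ℝ) 1) : ∃ t ∈ Icc (0 : ℝ) 1, ‖P t - Q u‖ < ε :=
  let ⟨γ, hγ, hlt⟩ := exists_isReparam_of_frechetDist_lt hP hQ h
  ⟨γ u, hγ.mapsTo hu, hlt u hu⟩

lemma norm_sub_one_lt_of_frechetDist_lt {P Q : ℝ → Pt d} (hP : ContinuousOn P (Icc 0 1))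
    (hQ : ContinuousOn Q (Icc 0 1)) {ε : ℝ} (h : frechetDist P Q < ε) : ‖P 1 - Q 1‖ < ε := by
  obtain ⟨γ, hγ, hlt⟩ := exists_isReparam_of_frechetDist_lt hP hQ h
  simpa only [hγ.map_one] using hlt 1 (right_mem_Icc.2 zero_le_one)

/-- A weakly monotone `φ` need not be a reparametrization, but `(1 - η) φ + η id` is one for every
small `η > 0`, at distance at most `η` from `φ`. -/
lemma frechetDist_eq_zero_of_monotoneOn {P Q : ℝ → Pt d} {φ : ℝ → ℝ}
    (hP : ContinuousOn P (Icc 0 1)) (hcont : ContinuousOn φ (Icc 0 1))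
    (hmono : MonotoneOn φ (Icc 0 1)) (h0 : φ 0 = 0) (h1 : φ 1 = 1)
    (hQ : EqOn Q (P ∘ φ) (Icc 0 1)) : frechetDist P Q = 0 := by
  refine le_antisymm (le_of_forall_pos_le_add fun ε hε => ?_) (frechetDist_nonneg P Q)
  obtain ⟨δ, hδ, hPδ⟩ := Metric.uniformContinuousOn_iff.1
    (isCompact_Icc.uniformContinuousOn_of_continuous hP) ε hε
  obtain ⟨η, hη0, hη⟩ := exists_between (lt_min hδ one_pos)
  have hγ := isReparam_mul_add_mul hcont hmono h0 h1 ⟨hη0, (hη.trans_le (min_le_right _ _)).le⟩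
  rw [zero_add]
  refine frechetDist_le_of_isReparam hγ fun u hu => ?_
  have hφu : φ u ∈ Icc (0 : ℝ) 1 := by
    simpa only [h0, h1] using hmono.mapsTo_Icc hu
  have hmove : dist ((1 - η) * φ u + η * u) (φ u) < δ := calc
    dist ((1 - η) * φ u + η * u) (φ u) = η * |u - φ u| := by
      rw [Real.dist_eq, ← abs_of_pos hη0, ← abs_mul, abs_of_pos hη0]; ring_nf
    _ ≤ η := mul_le_of_le_one_right hη0.le
      (abs_le.2 ⟨by linarith [hu.1, hφu.2], by linarith [hu.2, hφu.1]⟩)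
    _ < δ := hη.trans_le (min_le_left _ _)
  rw [hQ hu, ← dist_eq_norm]
  exact (hPδ _ (hγ.mapsTo hu) _ hφu hmove).le

end Frechet

/-! ### Fréchet distance from a curve to a subcurve between vertices -/

section VertexSubcurve

variable {d n a b : ℕ}

lemma exists_norm_sub_vertex_lt {P : ℝ → Pt d} (hP : ContinuousOn P (Icc 0 1)) {p : ℕ → Pt d}
    (hbn : b ≤ n) {ε : ℝ}
    (h : frechetDist P (subcurve (polyline fun g : Fin (n + 1) => p g) (a / n) (b / n)) < ε)
    {g : ℕ} (hg : g ∈ Icc a b) : ∃ t ∈ Icc (0 : ℝ) 1, ‖P t - p g‖ < ε := by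
  have hab : a ≤ b := hg.1.trans hg.2
  have hag : (a : ℝ) ≤ g := mod_cast hg.1
  have hgb : (g : ℝ) ≤ b := mod_cast hg.2
  have hu : ((g : ℝ) - a) / (b - a) ∈ Icc (0 : ℝ) 1 :=
    ⟨div_nonneg (by linarith) (by linarith), div_le_one_of_le₀ (by linarith) (by linarith)⟩
  have hvertex : (a : ℝ) + (g - a) / (b - a) * (b - a) = g := by
    rw [div_mul_cancel_of_imp fun hba => by linarith, add_sub_cancel]
  have hclose := exists_norm_sub_lt_of_frechetDist_lt hP
    (continuousOn_subcurve_polyline p hab hbn) h hu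
  rwa [subcurve_polyline p hab hbn hu, hvertex, interp_natCast p (hg.2.trans hbn)] at hclose

lemma norm_sub_last_vertex_lt {P : ℝ → Pt d} (hP : ContinuousOn P (Icc 0 1)) {p : ℕ → Pt d}
    (hab : a ≤ b) (hbn : b ≤ n) {ε : ℝ}
    (h : frechetDist P (subcurve (polyline fun g : Fin (n + 1) => p g) (a / n) (b / n)) < ε) :
    ‖P 1 - p b‖ < ε := by
  have hclose := norm_sub_one_lt_of_frechetDist_lt hP (continuousOn_subcurve_polyline p hab hbn) h
  rwa [subcurve_polyline p hab hbn (right_mem_Icc.2 zero_le_one), one_mul, add_sub_cancel,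
    interp_natCast p hbn] at hclose

lemma frechetDist_seg_subcurve_eq_zero {x : ℕ → ℝ} {c : ℝ} (hc : 0 < c) (v : Pt d) (hab : a ≤ b)
    (hbn : b ≤ n) (hx : ∀ g ∈ Ico a b, x g ≤ x (g + 1)) (ha : x a = 0) (hb : x b = c) :
    frechetDist (seg 0 (c • v))
      (subcurve (polyline fun g : Fin (n + 1) => x g • v) (a / n) (b / n)) = 0 := by
  have hab' : (a : ℝ) ≤ b := mod_cast hab
  have hparam : Monotone fun u : ℝ => (a : ℝ) + u * (b - a) := fun u v huv =>
    add_le_add le_rfl (mul_le_mul_of_nonneg_right huv (sub_nonneg.2 hab'))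
  have hmapsTo : MapsTo (fun u : ℝ => (a : ℝ) + u * (b - a)) (Icc 0 1) (Icc a b) := by
    simpa using (hparam.monotoneOn (Icc 0 1)).mapsTo_Icc
  have hmono : MonotoneOn (fun u => interp x n (a + u * (b - a))) (Icc 0 1) :=
    (monotoneOn_interp n hx).comp (hparam.monotoneOn _) hmapsTo
  refine frechetDist_eq_zero_of_monotoneOn (φ := fun u => interp x n (a + u * (b - a)) / c)
    (continuous_seg _ _).continuousOn ?_ ?_ ?_ ?_ fun u hu => ?_
  · exact (((continuous_interp x n).comp (by fun_prop)).div_const c).continuousOn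
  · exact fun u hu v hv huv => div_le_div_of_nonneg_right (hmono hu hv huv) hc.le
  · simp only [zero_mul, add_zero, interp_natCast x (hab.trans hbn), ha, zero_div]
  · simp only [one_mul, add_sub_cancel, interp_natCast x hbn, hb, div_self hc.ne']
  · rw [subcurve_polyline (fun g => x g • v) hab hbn hu, interp_smul_const, Function.comp_apply,
      seg_zero_smul, div_mul_cancel₀ _ hc.ne']

end VertexSubcurve

/-! ### The shattering curve -/

section Shattering

lemma norm_smul_sub_smul {E : Type*} [SeminormedAddCommGroup E] [NormedSpace ℝ E] {e : E}
    (he : ‖e‖ = 1) (x y : ℝ) : ‖x • e - y • e‖ = |x - y| := by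
  rw [← sub_smul, norm_smul, he, mul_one, Real.norm_eq_abs]

/-- The coordinate of the `r`-th vertex of block `b`. The binary digits of `b` encode the subset
realized by the block: after the separator and the start, the vertex for `k` is at an integer
exactly if `k` belongs to the subset. -/
def blockVertex (b : ℕ) : ℕ → ℝ
  | 0 => -1
  | 1 => 0
  | k + 2 => if b.testBit k then k + 1 else k + 1 / 2

lemma blockVertex_le_succ (b : ℕ) {r : ℕ} (hr : 1 ≤ r) :
    blockVertex b r ≤ blockVertex b (r + 1) := by
  match r, hr with
  | 1, _ => simp only [blockVertex]; split_ifs <;> norm_num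
  | k + 2, _ => simp only [blockVertex]; push_cast; split_ifs <;> linarith

lemma testBit_of_abs_sub_blockVertex_lt {b k r : ℕ} (h : |(k + 1 : ℝ) - blockVertex b r| < 1 / 2) :
    b.testBit k := by
  have hk : (0 : ℝ) ≤ k := k.cast_nonneg
  rw [abs_lt] at h
  match r with
  | 0 => simp only [blockVertex] at h; linarith
  | 1 => simp only [blockVertex] at h; linarith
  | j + 2 =>
    simp only [blockVertex] at h
    split_ifs at h with hj
    · have hjk : j < k + 1 := by exact_mod_cast (by linarith : (j : ℝ) < k + 1)
      have hkj : k < j + 1 := by exact_mod_cast (by linarith : (k : ℝ) < j + 1)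
      rwa [show k = j by omega]
    · have hjk : j < k + 1 := by exact_mod_cast (by linarith : (j : ℝ) < k + 1)
      have hkj : k < j := by exact_mod_cast (by linarith : (k : ℝ) < j)
      omega

/-- The coordinate of the `g`-th vertex of the concatenation of all blocks, cut to length
`t + 2`. -/
def vertex (t g : ℕ) : ℝ := blockVertex (g / (t + 2)) (g % (t + 2))

lemma vertex_mul_add (b : ℕ) {t r : ℕ} (hr : r < t + 2) :
    vertex t (b * (t + 2) + r) = blockVertex b r := by
  have hdiv : (b * (t + 2) + r) / (t + 2) = b := by
    rw [mul_comm, Nat.mul_add_div (by omega), Nat.div_eq_of_lt hr, add_zero]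
  rw [vertex, hdiv, Nat.mul_add_mod_self_right, Nat.mod_eq_of_lt hr]

lemma vertex_mul (t b : ℕ) : vertex t (b * (t + 2)) = -1 :=
  vertex_mul_add b (r := 0) (by omega)

variable {d t n b k : ℕ} {e : Pt d}

lemma frechetDist_seg_block_eq_zero (e : Pt d) (hk : k < t) (hbk : b.testBit k)
    (hn : b * (t + 2) + (k + 2) ≤ n) :
    frechetDist (seg 0 ((k + 1 : ℝ) • e))
      (subcurve (polyline fun g : Fin (n + 1) => vertex t g • e)
        ((b * (t + 2) + 1 : ℕ) / n) ((b * (t + 2) + (k + 2) : ℕ) / n)) = 0 := by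
  refine frechetDist_seg_subcurve_eq_zero (by positivity) e (by omega) hn (fun g hg => ?_) ?_ ?_
  · obtain ⟨hg1, hg2⟩ := hg
    obtain ⟨r, rfl⟩ := Nat.exists_eq_add_of_le (show b * (t + 2) ≤ g by omega)
    rw [add_assoc, vertex_mul_add b (by omega), vertex_mul_add b (by omega)]
    exact blockVertex_le_succ b (by omega)
  · exact vertex_mul_add b (by omega)
  · rw [vertex_mul_add b (by omega), blockVertex, if_pos hbk]

lemma separator_notMem_Icc (he : ‖e‖ = 1) {c : ℝ} (hc : 0 ≤ c) {i j : ℕ} (hj : j ≤ n)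
    (h : frechetDist (seg 0 (c • e))
      (subcurve (polyline fun g : Fin (n + 1) => vertex t g • e) (i / n) (j / n)) < 1) (b : ℕ) :
    b * (t + 2) ∉ Icc i j := by
  intro hb
  obtain ⟨u, hu, hlt⟩ := exists_norm_sub_vertex_lt (p := fun g => vertex t g • e)
    (continuous_seg 0 (c • e)).continuousOn hj h hb
  rw [seg_zero_smul, norm_smul_sub_smul he, vertex_mul, abs_lt] at hlt
  linarith [mul_nonneg hu.1 hc]

lemma testBit_of_frechetDist_lt (he : ‖e‖ = 1) {i j : ℕ} (hi : i ≤ b * (t + 2) + 1)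
    (hj : b * (t + 2) + 1 < j) (hjn : j ≤ n)
    (h : frechetDist (seg 0 ((k + 1 : ℝ) • e))
      (subcurve (polyline fun g : Fin (n + 1) => vertex t g • e) (i / n) (j / n)) < 1 / 2) :
    b.testBit k := by
  have hnext : j < b * (t + 2) + (t + 2) := by
    by_contra hle
    exact separator_notMem_Icc he (by positivity) hjn (h.trans one_half_lt_one) (b + 1)
      ⟨by linarith, by linarith⟩
  obtain ⟨r, rfl⟩ := Nat.exists_eq_add_of_le (show b * (t + 2) ≤ j by omega)
  have hlast := norm_sub_last_vertex_lt (p := fun g => vertex t g • e)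
    (continuous_seg _ _).continuousOn (by omega) hjn h
  rw [seg_one, norm_smul_sub_smul he, vertex_mul_add b (by omega)] at hlast
  exact testBit_of_abs_sub_blockVertex_lt hlast

lemma exists_frechetDist_le_iff_testBit (he : ‖e‖ = 1) {Δ : ℝ} (hΔ0 : 0 ≤ Δ) (hΔ : Δ < 1 / 2)
    (hk : k < t) (hn : b * (t + 2) + (t + 1) ≤ n) :
    (∃ i j, i ≤ b * (t + 2) + 1 ∧ b * (t + 2) + 1 < j ∧ j ≤ n ∧
      frechetDist (seg 0 ((k + 1 : ℝ) • e))
        (subcurve (polyline fun g : Fin (n + 1) => vertex t g • e) (i / n) (j / n)) ≤ Δ) ↔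
      b.testBit k := by
  refine ⟨fun ⟨i, j, hi, hj, hjn, h⟩ => testBit_of_frechetDist_lt he hi hj hjn (h.trans_lt hΔ),
    fun hbk => ⟨_, b * (t + 2) + (k + 2), le_rfl, by omega, by omega, ?_⟩⟩
  exact (frechetDist_seg_block_eq_zero e hk hbk (by omega)).trans_le hΔ0

end Shattering

lemma exists_lt_two_pow_forall_testBit_iff {t : ℕ} (T : Set (Fin t)) :
    ∃ b < 2 ^ t, ∀ k : Fin t, b.testBit k ↔ k ∈ T := by
  classical
  exact ⟨_, Nat.ofBits_lt_two_pow fun k => decide (k ∈ T), fun k => by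
    rw [Nat.testBit_ofBits_lt _ _ k.2, decide_eq_true_iff]⟩

theorem stmt18_general {d : ℕ} [NeZero d] (tn : ℕ) (htn : 1 ≤ tn) {Δ : ℝ} (hΔ0 : 0 ≤ Δ)
    (hΔ : Δ < 1 / 2) :
    ∃ (m : ℕ) (P : ℝ → Pt d) (tb : ℕ → ℝ) (Q : Fin tn → ℝ → Pt d),
      2 ≤ m ∧ m ≤ (tn + 2) * 2 ^ tn ∧
      (∃ nP : ℕ, IsPolygonal P nP) ∧
      tb 1 = 0 ∧ tb m = 1 ∧ (∀ i, 1 ≤ i → i < m → tb i < tb (i + 1)) ∧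
      (∀ s, IsPolygonal (Q s) 2) ∧ Function.Injective Q ∧
      ∀ T : Set (Fin tn), ∃ z, 1 ≤ z ∧ z < m ∧
        ∀ s, s ∈ T ↔ ∃ i j, 1 ≤ i ∧ i ≤ z ∧ z < j ∧ j ≤ m ∧
          frechetDist (Q s) (subcurve P (tb i) (tb j)) ≤ Δ := by
  obtain ⟨e, he⟩ : ∃ e : Pt d, ‖e‖ = 1 := ⟨EuclideanSpace.single 0 1, by simp⟩
  have he0 : e ≠ 0 := norm_ne_zero_iff.1 (he ▸ one_ne_zero)
  have hm : 2 ≤ (tn + 2) * 2 ^ tn := le_mul_of_le_of_one_le (by omega) Nat.one_le_two_pow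
  obtain ⟨n, hn⟩ : ∃ n, (tn + 2) * 2 ^ tn = n + 1 := ⟨_, (Nat.sub_add_cancel (by omega)).symm⟩
  have hn0 : (0 : ℝ) < n := by exact_mod_cast (by omega : 0 < n)
  -- breakpoints are numbered from `1`, vertices from `0`
  refine ⟨n + 1, polyline fun g : Fin (n + 1) => vertex tn g • e, fun i => (i - 1 : ℕ) / n,
    fun s => seg 0 ((s + 1 : ℝ) • e), hn ▸ hm, hn.ge, ⟨n + 1, n, le_rfl, _, rfl⟩, by simp,
    div_self hn0.ne', fun i hi _ => ?_, fun s => ⟨1, le_rfl, _, (polyline_pair _ _).symm⟩,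
    fun s s' h => ?_, fun T => ?_⟩
  · exact div_lt_div_of_pos_right (by exact_mod_cast (by omega : i - 1 < i + 1 - 1)) hn0
  · simpa [Fin.ext_iff] using smul_left_injective ℝ he0 (seg_right_injective 0 h)
  obtain ⟨b, hb, hbT⟩ := exists_lt_two_pow_forall_testBit_iff T
  have hblock : b * (tn + 2) + (tn + 2) ≤ n + 1 := by nlinarith
  refine ⟨b * (tn + 2) + 2, by omega, by omega, fun s => ?_⟩
  rw [← hbT, ← exists_frechetDist_le_iff_testBit he hΔ0 hΔ s.2 (n := n) (by omega)]
  constructor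
  · rintro ⟨i, j, hi, hj, hjn, h⟩
    exact ⟨i + 1, j + 1, by omega, by omega, by omega, by omega, h⟩
  · rintro ⟨i, j, -, hi, hj, hjn, h⟩
    exact ⟨i - 1, j - 1, by omega, by omega, by omega, h⟩

/-- VC-dimension lower bound for `d = 1`, `ℓ = 2`: for every `tn ≥ 1`
there are `m ≤ (tn+2)·2^tn`, a polygonal curve `P : [0,1] → ℝ` with breakpoints
`0 = tb 1 < … < tb m = 1`, and `tn` distinct line segments `Q 0, …` in `𝕏¹₂` that are
shattered by the dual sets `r_z` with `Δ = 1/3`. -/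
theorem stmt18 (tn : ℕ) (htn : 1 ≤ tn) :
    ∃ (m : ℕ) (P : ℝ → Pt 1) (tb : ℕ → ℝ) (Q : Fin tn → ℝ → Pt 1),
      2 ≤ m ∧ m ≤ (tn + 2) * 2 ^ tn ∧
      (∃ nP : ℕ, IsPolygonal P nP) ∧
      tb 1 = 0 ∧ tb m = 1 ∧ (∀ i, 1 ≤ i → i < m → tb i < tb (i + 1)) ∧
      (∀ s, IsPolygonal (Q s) 2) ∧ Function.Injective Q ∧
      ∀ T : Set (Fin tn), ∃ z, 1 ≤ z ∧ z < m ∧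
        ∀ s, s ∈ T ↔ ∃ i j, 1 ≤ i ∧ i ≤ z ∧ z < j ∧ j ≤ m ∧
          frechetDist (Q s) (subcurve P (tb i) (tb j)) ≤ 1 / 3 := by
  exact stmt18_general tn htn (by norm_num) (by norm_num)
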